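/- arXiv:2503.01857 — 10 statements merged into one kernel-verified Lean document; each statement's English description precedes it below -/
import Mathlib

section
/- Let n ≥ 1, let 0 < α ≤ 1, γ > 0, t_c > 0, and let ε : ℝ → ℝⁿ be continuous on [0, t_c) and follow the noise-free FOZNN convergence-phase dynamics on (0, t_c). Then ε(t) tends to 0 as t tends to t_c from the left. -/
/-!
The dynamics is a linear equation `u' = k u` whose scalar rate satisfies `k t ≤ -c / (T - t)` near
the final time `T`, for any `c < 1`: the time factor `t ^ (α - 1) / T ^ (α - 1)` tends to `1`, and
the term in `γ` only accelerates the decay. The rescaled solution `(T - t) ^ (-c) • u t` then solves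
a linear equation with nonpositive rate, so its norm is antitone, and `u = O((T - t) ^ c)`.
-/

open Set Filter Topology Asymptotics

section LinearDecay

variable {E : Type*} [NormedAddCommGroup E] [NormedSpace ℝ E] {D : Set ℝ} {k : ℝ → ℝ}

theorem antitoneOn_abs_of_hasDerivWithinAt_mul_nonpos {f : ℝ → ℝ} (hD : Convex ℝ D)
    (hf : ContinuousOn f D)
    (hf' : ∀ t ∈ interior D, HasDerivWithinAt f (k t * f t) (interior D) t)
    (hk : ∀ t ∈ interior D, k t ≤ 0) : AntitoneOn (fun t ↦ |f t|) D := by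
  have hderiv : ∀ t ∈ interior D,
      HasDerivWithinAt (fun t ↦ f t ^ 2) (2 * k t * f t ^ 2) (interior D) t := fun t ht ↦
    ((hf' t ht).fun_pow 2).congr_deriv (by push_cast; ring)
  have hsq : AntitoneOn (fun t ↦ f t ^ 2) D :=
    antitoneOn_of_hasDerivWithinAt_nonpos hD (hf.pow 2) hderiv fun t ht ↦
      mul_nonpos_of_nonpos_of_nonneg (by linarith [hk t ht]) (sq_nonneg (f t))
  exact fun s hs t ht hst ↦ sq_le_sq.mp (hsq hs ht hst)

/- The norm of `E` need not be differentiable, so the scalar case is applied to `φ ∘ u` for every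
functional `φ`, and Hahn–Banach recovers the norm. -/
theorem antitoneOn_norm_of_hasDerivWithinAt_smul_nonpos {u : ℝ → E} (hD : Convex ℝ D)
    (hu : ContinuousOn u D)
    (hu' : ∀ t ∈ interior D, HasDerivWithinAt u (k t • u t) (interior D) t)
    (hk : ∀ t ∈ interior D, k t ≤ 0) : AntitoneOn (fun t ↦ ‖u t‖) D := by
  intro s hs t ht hst
  refine NormedSpace.norm_le_dual_bound ℝ (u t) (norm_nonneg (u s)) fun φ ↦ ?_
  have hφ' : ∀ r ∈ interior D,
      HasDerivWithinAt (fun r ↦ φ (u r)) (k r * φ (u r)) (interior D) r := fun r hr ↦ by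
    rw [← smul_eq_mul, ← map_smul]
    exact φ.hasFDerivAt.comp_hasDerivWithinAt r (hu' r hr)
  have hφ : AntitoneOn (fun r ↦ |φ (u r)|) D :=
    antitoneOn_abs_of_hasDerivWithinAt_mul_nonpos hD (φ.continuous.comp_continuousOn hu) hφ' hk
  calc ‖φ (u t)‖ ≤ ‖φ (u s)‖ := hφ hs ht hst
    _ ≤ ‖u s‖ * ‖φ‖ := (φ.le_opNorm (u s)).trans_eq (mul_comm _ _)

theorem hasDerivAt_rpow_sub_smul {u : ℝ → E} {T t a : ℝ} (c : ℝ) (ht : t < T)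
    (hu : HasDerivAt u (a • u t) t) :
    HasDerivAt (fun r ↦ (T - r) ^ (-c) • u r)
      ((a + c / (T - t)) • (T - t) ^ (-c) • u t) t := by
  have hpos : 0 < T - t := sub_pos.mpr ht
  have hpow : HasDerivAt (fun r ↦ (T - r) ^ (-c)) (c / (T - t) * (T - t) ^ (-c)) t := by
    refine (((hasDerivAt_id' t).const_sub T).rpow_const (Or.inl hpos.ne')).congr_deriv ?_
    rw [Real.rpow_sub_one hpos.ne']
    ring
  exact (hpow.fun_smul hu).congr_deriv (by module)

theorem isBigO_rpow_sub_of_hasDerivAt_smul {u : ℝ → E} {T c : ℝ}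
    (hu : ∀ᶠ t in 𝓝[<] T, HasDerivAt u (k t • u t) t)
    (hk : ∀ᶠ t in 𝓝[<] T, k t ≤ -(c / (T - t))) :
    u =O[𝓝[<] T] fun t ↦ (T - t) ^ c := by
  obtain ⟨a, haT, ha⟩ := mem_nhdsLT_iff_exists_Ioo_subset.mp (hu.and hk)
  have hv (t : ℝ) (ht : t ∈ Ioo a T) := hasDerivAt_rpow_sub_smul c ht.2 (ha ht).1
  have hanti : AntitoneOn (fun t ↦ ‖(T - t) ^ (-c) • u t‖) (Ioo a T) := by
    refine antitoneOn_norm_of_hasDerivWithinAt_smul_nonpos (k := fun t ↦ k t + c / (T - t))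
      (convex_Ioo a T) (fun t ht ↦ (hv t ht).continuousAt.continuousWithinAt) ?_ ?_ <;>
      rw [interior_Ioo]
    · exact fun t ht ↦ (hv t ht).hasDerivWithinAt
    · exact fun t ht ↦ le_neg_iff_add_nonpos_right.mp (ha ht).2
  obtain ⟨s, hs⟩ : (Ioo a T).Nonempty := nonempty_Ioo.mpr haT
  refine IsBigO.of_bound ‖(T - s) ^ (-c) • u s‖ ?_
  filter_upwards [Ioo_mem_nhdsLT hs.2] with t ht
  have hpos : 0 < (T - t) ^ c := Real.rpow_pos_of_pos (sub_pos.mpr ht.2) c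
  calc ‖u t‖ = ‖(T - t) ^ (-c) • u t‖ * ‖(T - t) ^ c‖ := by
        rw [Real.rpow_neg (sub_pos.mpr ht.2).le, norm_smul, norm_inv, mul_right_comm,
          inv_mul_cancel₀ (norm_ne_zero_iff.mpr hpos.ne'), one_mul]
    _ ≤ ‖(T - s) ^ (-c) • u s‖ * ‖(T - t) ^ c‖ := by
        gcongr
        exact hanti hs ⟨hs.1.trans ht.1, ht.2⟩ ht.1.le

theorem tendsto_zero_of_hasDerivAt_smul {u : ℝ → E} {T c : ℝ} (hc : 0 < c)
    (hu : ∀ᶠ t in 𝓝[<] T, HasDerivAt u (k t • u t) t)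
    (hk : ∀ᶠ t in 𝓝[<] T, k t ≤ -(c / (T - t))) :
    Tendsto u (𝓝[<] T) (𝓝 0) := by
  have hpow : Continuous fun t : ℝ ↦ (T - t) ^ c :=
    (continuous_const.sub continuous_id).rpow_const fun _ ↦ Or.inr hc.le
  refine (isBigO_rpow_sub_of_hasDerivAt_smul hu hk).trans_tendsto
    (tendsto_nhdsWithin_of_tendsto_nhds ?_)
  simpa [Real.zero_rpow hc.ne'] using hpow.tendsto T

end LinearDecay

theorem tendsto_rpow_div_rpow_nhds_one {T : ℝ} (hT : 0 < T) (p : ℝ) :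
    Tendsto (fun t ↦ t ^ p / T ^ p) (𝓝 T) (𝓝 1) := by
  have h := (Real.continuousAt_rpow_const T p (Or.inl hT.ne')).tendsto.div_const (T ^ p)
  rwa [div_self (Real.rpow_pos_of_pos hT p).ne'] at h

theorem eventually_foznn_rate_le {γ T c : ℝ} (α : ℝ) (hγ : 0 ≤ γ) (hT : 0 < T) (hc : c < 1)
    {r : ℝ → ℝ} (hr : ∀ t, 0 ≤ r t) :
    ∀ᶠ t in 𝓝[<] T, -(t ^ (α - 1) / T ^ (α - 1)) * (1 / (T - t) + γ * r t / (T - t) ^ 2) ≤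
      -(c / (T - t)) := by
  have hfactor : Tendsto (fun t ↦ t ^ (α - 1) / T ^ (α - 1)) (𝓝[<] T) (𝓝 1) :=
    tendsto_nhdsWithin_of_tendsto_nhds (tendsto_rpow_div_rpow_nhds_one hT (α - 1))
  filter_upwards [self_mem_nhdsWithin, hfactor.eventually_const_lt hc,
    hfactor.eventually_const_lt one_pos] with t ht hct hpos
  have hTt : 0 < T - t := sub_pos.mpr ht
  have hrt : 0 ≤ γ * r t / (T - t) ^ 2 :=
    div_nonneg (mul_nonneg hγ (hr t)) (sq_nonneg _)
  rw [neg_mul, neg_le_neg_iff]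
  calc c / (T - t) = c * (1 / (T - t)) := div_eq_mul_one_div c (T - t)
    _ ≤ t ^ (α - 1) / T ^ (α - 1) * (1 / (T - t)) := by gcongr
    _ ≤ t ^ (α - 1) / T ^ (α - 1) * (1 / (T - t) + γ * r t / (T - t) ^ 2) := by
        gcongr
        exact le_add_of_nonneg_right hrt

theorem foznn_noise_free_convergence_general {E : Type*} [NormedAddCommGroup E] [NormedSpace ℝ E]
    {α γ tc : ℝ} (hγ : 0 ≤ γ) (htc : 0 < tc) {ε : ℝ → E}
    (hdyn : ∀ᶠ t in 𝓝[<] tc, HasDerivAt ε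
      ((-(t ^ (α - 1) / tc ^ (α - 1)) * (1 / (tc - t) + γ * ‖ε t‖ / (tc - t) ^ 2)) • ε t) t) :
    Tendsto ε (𝓝[<] tc) (𝓝 0) :=
  tendsto_zero_of_hasDerivAt_smul one_half_pos hdyn
    (eventually_foznn_rate_le α hγ htc one_half_lt_one fun t ↦ norm_nonneg (ε t))

/-- For `ε` continuous on `[0, t_c)` following the noise-free FOZNN
convergence-phase dynamics on `(0, t_c)`, `ε(t) → 0` as `t → t_c⁻`. -/
theorem foznn_noise_free_convergence
    (n : ℕ) (hn : 1 ≤ n) (α γ tc : ℝ)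
    (hα0 : 0 < α) (hα1 : α ≤ 1) (hγ : 0 < γ) (htc : 0 < tc)
    (ε : ℝ → EuclideanSpace ℝ (Fin n))
    (hcont : ContinuousOn ε (Set.Ico 0 tc))
    (hdyn : ∀ t ∈ Set.Ioo (0 : ℝ) tc, ε t ≠ 0 ∧
      HasDerivAt ε
        ((-(t ^ (α - 1) / tc ^ (α - 1)) *
          (1 / (tc - t) + γ * ‖ε t‖ / (tc - t) ^ 2)) • ε t) t) :
    Filter.Tendsto ε (nhdsWithin tc (Set.Iio tc)) (nhds 0) :=
  foznn_noise_free_convergence_general hγ.le htc <|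
    eventually_of_mem (Ioo_mem_nhdsLT htc) fun t ht ↦ (hdyn t ht).2
end

section
/- Let n ≥ 1, let 0 < α ≤ 1, γ > 0, t_c > 0, and let ε : ℝ → ℝⁿ follow the noise-free FOZNN convergence-phase dynamics on (0, t_c). Define V(t) = ‖ε(t)‖/(t_c − t). Then for every t ∈ (0, t_c), V is differentiable at t and its derivative satisfies V'(t) ≤ −γ V(t)²/(t_c − t) ≤ 0. -/
/-!
When `ε' = c • ε` at a time `t`, the vector `ε` moves to first order along its own ray, so
`‖ε‖' = c ‖ε‖` in any normed space, even where the norm is not smooth. Hence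
`V = ‖ε‖ / (t_c - t)` satisfies `V' = (c + 1 / (t_c - t)) V`. For the FOZNN dynamics
`c = -k (1 + γ V) / (t_c - t)` with gain `k = (t / t_c) ^ (α - 1) ≥ 1`. Taking `k = 1` gives
exactly `V' = -γ V ^ 2 / (t_c - t)`, and a larger gain only decreases `V'`.
-/

open scoped Topology

section NormedSpace

variable {E : Type*} [NormedAddCommGroup E]

/-- The Lyapunov function `V(t) = ‖ε(t)‖ / (t_c - t)` of the convergence phase, measuring the error
relative to the remaining time. It takes the junk value `0` at `t = t_c`. -/
noncomputable def foznnLyapunov (tc : ℝ) (ε : ℝ → E) (t : ℝ) : ℝ :=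
  ‖ε t‖ / (tc - t)

theorem foznnLyapunov_nonneg {tc t : ℝ} (ht : t ≤ tc) (ε : ℝ → E) :
    0 ≤ foznnLyapunov tc ε t :=
  div_nonneg (norm_nonneg _) (sub_nonneg.mpr ht)

variable [NormedSpace ℝ E]

theorem hasDerivAt_norm_of_hasDerivAt_smul_self {f : ℝ → E} {c t : ℝ}
    (hf : HasDerivAt f (c • f t) t) : HasDerivAt (fun s => ‖f s‖) (c * ‖f t‖) t := by
  have scale_nonneg : ∀ᶠ s in 𝓝 t, 0 ≤ 1 + c * (s - t) := by
    have hcont : ContinuousAt (fun s => 1 + c * (s - t)) t := by fun_prop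
    exact (hcont.eventually_const_lt (by simp)).mono fun _ => le_of_lt
  rw [hasDerivAt_iff_isLittleO] at hf ⊢
  refine (Asymptotics.IsBigO.of_bound' ?_).trans_isLittleO hf
  filter_upwards [scale_nonneg] with s hs
  calc ‖‖f s‖ - ‖f t‖ - (s - t) • (c * ‖f t‖)‖
      = |‖f s‖ - ‖(1 + c * (s - t)) • f t‖| := by
        rw [norm_smul_of_nonneg hs, Real.norm_eq_abs, smul_eq_mul]
        ring_nf
    _ ≤ ‖f s - (1 + c * (s - t)) • f t‖ := abs_norm_sub_norm_le _ _
    _ = ‖f s - f t - (s - t) • c • f t‖ := by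
        congr 1
        module

theorem hasDerivAt_foznnLyapunov {tc t c : ℝ} {ε : ℝ → E} (ht : t ≠ tc)
    (hε : HasDerivAt ε (c • ε t) t) :
    HasDerivAt (foznnLyapunov tc ε) ((c + 1 / (tc - t)) * foznnLyapunov tc ε t) t := by
  have hne : tc - t ≠ 0 := sub_ne_zero.mpr ht.symm
  have hremaining : HasDerivAt (fun s => tc - s) (-1) t := (hasDerivAt_id t).const_sub tc
  refine ((hasDerivAt_norm_of_hasDerivAt_smul_self hε).fun_div hremaining hne).congr_deriv ?_
  rw [foznnLyapunov]
  field_simp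
  ring

theorem foznn_noise_free_lyapunov_derivative_general {γ tc k t : ℝ} {ε : ℝ → E}
    (hγ : 0 ≤ γ) (hk : 1 ≤ k) (ht : t < tc)
    (hε : HasDerivAt ε ((-k * (1 / (tc - t) + γ * ‖ε t‖ / (tc - t) ^ 2)) • ε t) t) :
    DifferentiableAt ℝ (foznnLyapunov tc ε) t ∧
      deriv (foznnLyapunov tc ε) t ≤ -(γ * foznnLyapunov tc ε t ^ 2 / (tc - t)) ∧
      -(γ * foznnLyapunov tc ε t ^ 2 / (tc - t)) ≤ 0 := by
  have hremaining : 0 < tc - t := sub_pos.mpr ht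
  have hV : 0 ≤ foznnLyapunov tc ε t := foznnLyapunov_nonneg ht.le ε
  have hderiv := hasDerivAt_foznnLyapunov ht.ne hε
  refine ⟨hderiv.differentiableAt, ?_, neg_nonpos.mpr (by positivity)⟩
  set V := foznnLyapunov tc ε t with hVdef
  have gain_excess_nonneg : 0 ≤ (k - 1) * ((1 + γ * V) * V / (tc - t)) :=
    mul_nonneg (sub_nonneg.mpr hk) (by positivity)
  calc deriv (foznnLyapunov tc ε) t
      = (-k * (1 / (tc - t) + γ * ‖ε t‖ / (tc - t) ^ 2) + 1 / (tc - t)) * V := hderiv.deriv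
    _ = -(γ * V ^ 2 / (tc - t)) - (k - 1) * ((1 + γ * V) * V / (tc - t)) := by
        rw [hVdef, foznnLyapunov]
        field_simp
        ring
    _ ≤ -(γ * V ^ 2 / (tc - t)) := sub_le_self _ gain_excess_nonneg

end NormedSpace

theorem one_le_rpow_div_rpow_of_nonpos {x y p : ℝ} (hx : 0 < x) (hxy : x ≤ y) (hp : p ≤ 0) :
    1 ≤ x ^ p / y ^ p :=
  (one_le_div (Real.rpow_pos_of_pos (hx.trans_le hxy) p)).mpr
    (Real.rpow_le_rpow_of_nonpos hx hxy hp)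

/-- For `ε` following the noise-free FOZNN convergence-phase dynamics on
`(0, t_c)` and `V(t) = ‖ε(t)‖/(t_c − t)`, for every `t ∈ (0, t_c)` the function `V` is
differentiable at `t` with `V'(t) ≤ −γ V(t)²/(t_c − t) ≤ 0`. -/
theorem foznn_noise_free_lyapunov_derivative
    (n : ℕ) (hn : 1 ≤ n) (α γ tc : ℝ)
    (hα0 : 0 < α) (hα1 : α ≤ 1) (hγ : 0 < γ) (htc : 0 < tc)
    (ε : ℝ → EuclideanSpace ℝ (Fin n))
    (hdyn : ∀ t ∈ Set.Ioo (0 : ℝ) tc, ε t ≠ 0 ∧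
      HasDerivAt ε
        ((-(t ^ (α - 1) / tc ^ (α - 1)) *
          (1 / (tc - t) + γ * ‖ε t‖ / (tc - t) ^ 2)) • ε t) t)
    (V : ℝ → ℝ) (hV : ∀ t, V t = ‖ε t‖ / (tc - t)) :
    ∀ t ∈ Set.Ioo (0 : ℝ) tc,
      DifferentiableAt ℝ V t ∧
      deriv V t ≤ -(γ * (V t) ^ 2 / (tc - t)) ∧
      -(γ * (V t) ^ 2 / (tc - t)) ≤ 0 := by
  obtain rfl : V = foznnLyapunov tc ε := funext hV
  exact fun t ht => foznn_noise_free_lyapunov_derivative_general hγ.le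
    (one_le_rpow_div_rpow_of_nonpos ht.1 ht.2.le (sub_nonpos.mpr hα1)) ht.2 (hdyn t ht).2
end

section
/- Let t_c > 0 and γ > 0. Let V : ℝ → ℝ be continuous on [0, t_c), differentiable at every t ∈ (0, t_c), with V(t) > 0 for all t ∈ [0, t_c) and V'(t) ≤ −γ V(t)²/(t_c − t) for all t ∈ (0, t_c). Then for every t ∈ (0, t_c), ln(t_c/(t_c − t)) ≤ (1/γ)·(1/V(t) − 1/V(0)); consequently V(t) tends to 0 as t tends to t_c from the left. -/
/-!
Dividing `V' ≤ -γ V² / (tc - t)` by `-V²` linearises it: `(1 / V)' ≥ γ / (tc - t)`, and the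
right-hand side is the derivative of `γ log (tc / (tc - t))`. Hence `1 / V - γ log (tc / (tc - t))`
is nondecreasing on `[0, tc)`. Comparing with its value at `0`, where the logarithm vanishes, gives
the inequality; as the logarithm blows up at `tc`, so does `1 / V`.
-/

open Filter Set Topology

theorem monotoneOn_inv_sub_of_hasDerivAt_le_neg_mul_sq {D : Set ℝ} (hD : Convex ℝ D)
    {V V' G g : ℝ → ℝ} (hVcont : ContinuousOn V D) (hGcont : ContinuousOn G D)
    (hV : ∀ t ∈ interior D, HasDerivAt V (V' t) t)
    (hG : ∀ t ∈ interior D, HasDerivAt G (g t) t)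
    (hne : ∀ t ∈ D, V t ≠ 0) (hle : ∀ t ∈ interior D, V' t ≤ -(g t * V t ^ 2)) :
    MonotoneOn (fun t ↦ (V t)⁻¹ - G t) D := by
  refine monotoneOn_of_hasDerivWithinAt_nonneg hD ((hVcont.inv₀ hne).sub hGcont)
    (f' := fun t ↦ -V' t / V t ^ 2 - g t) (fun t ht ↦ ?_) fun t ht ↦ ?_
  · exact (((hV t ht).fun_inv (hne t (interior_subset ht))).sub (hG t ht)).hasDerivWithinAt
  · have hsq : 0 < V t ^ 2 := sq_pos_of_ne_zero (hne t (interior_subset ht))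
    have hg : g t ≤ -V' t / V t ^ 2 := (le_div_iff₀ hsq).2 (le_neg_of_le_neg (hle t ht))
    exact sub_nonneg.2 hg

theorem tendsto_zero_of_monotoneOn_inv_sub {α 𝕜 : Type*} [Preorder α] [Field 𝕜] [LinearOrder 𝕜]
    [IsStrictOrderedRing 𝕜] [TopologicalSpace 𝕜] [OrderTopology 𝕜] {V G : α → 𝕜} {s : Set α}
    {l : Filter α} {a : α} (hmono : MonotoneOn (fun t ↦ (V t)⁻¹ - G t) s) (ha : a ∈ s)
    (hl : ∀ᶠ t in l, t ∈ s ∧ a ≤ t) (hG : Tendsto G l atTop) :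
    Tendsto V l (𝓝 0) := by
  have hlower : ∀ᶠ t in l, (V a)⁻¹ - G a + G t ≤ (V t)⁻¹ :=
    hl.mono fun t ht ↦ le_sub_iff_add_le.1 (hmono ha ht.1 ht.2)
  have hinv : Tendsto (fun t ↦ (V t)⁻¹) l atTop :=
    tendsto_atTop_mono' l hlower (tendsto_atTop_add_const_left l _ hG)
  exact hinv.inv_tendsto_atTop.congr fun t ↦ inv_inv (V t)

theorem hasDerivAt_log_div_sub {b c t : ℝ} (hc : c ≠ 0) (ht : t ≠ b) :
    HasDerivAt (fun t ↦ Real.log (c / (b - t))) (1 / (b - t)) t := by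
  have hbt : b - t ≠ 0 := sub_ne_zero.2 ht.symm
  have hdiv : HasDerivAt (fun t ↦ c / (b - t)) (c / (b - t) ^ 2) t := by
    simpa using (hasDerivAt_const t c).fun_div ((hasDerivAt_id' t).const_sub b) hbt
  convert hdiv.log (div_ne_zero hc hbt) using 1
  field_simp

theorem monotoneOn_inv_sub_mul_log_div_sub {D : Set ℝ} (hD : Convex ℝ D) {V V' : ℝ → ℝ}
    {b c γ : ℝ} (hc : c ≠ 0) (hb : b ∉ D) (hVcont : ContinuousOn V D)
    (hV : ∀ t ∈ interior D, HasDerivAt V (V' t) t) (hne : ∀ t ∈ D, V t ≠ 0)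
    (hle : ∀ t ∈ interior D, V' t ≤ -(γ * V t ^ 2 / (b - t))) :
    MonotoneOn (fun t ↦ (V t)⁻¹ - γ * Real.log (c / (b - t))) D := by
  have hG : ∀ t ∈ D, HasDerivAt (fun t ↦ γ * Real.log (c / (b - t))) (γ * (1 / (b - t))) t :=
    fun t ht ↦ (hasDerivAt_log_div_sub hc (ne_of_mem_of_not_mem ht hb)).const_mul γ
  exact monotoneOn_inv_sub_of_hasDerivAt_le_neg_mul_sq hD hVcont
    (fun t ht ↦ (hG t ht).continuousAt.continuousWithinAt) hV
    (fun t ht ↦ hG t (interior_subset ht)) hne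
    fun t ht ↦ (hle t ht).trans_eq (by ring)

theorem tendsto_log_div_sub_nhdsLT {b c : ℝ} (hc : 0 < c) :
    Tendsto (fun t ↦ Real.log (c / (b - t))) (𝓝[<] b) atTop := by
  have hsub : Tendsto (fun t ↦ b - t) (𝓝[<] b) (𝓝[>] 0) := by
    refine tendsto_nhdsWithin_iff.2
      ⟨?_, eventually_mem_nhdsWithin.mono fun t ht ↦ mem_Ioi.2 (sub_pos.2 ht)⟩
    exact ((continuous_const.sub continuous_id).tendsto' b 0 (sub_self b)).mono_left
      nhdsWithin_le_nhds
  exact Real.tendsto_log_atTop.comp ((tendsto_inv_nhdsGT_zero.comp hsub).const_mul_atTop hc)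

/-- Scalar differential inequality `V' ≤ −γ V²/(t_c − t)` for a positive
continuous `V` on `[0, t_c)` yields `ln(t_c/(t_c − t)) ≤ (1/γ)(1/V(t) − 1/V(0))`
for `t ∈ (0, t_c)`, and consequently `V(t) → 0` as `t → t_c⁻`. -/
theorem scalar_comparison_noise_free
    (tc γ : ℝ) (htc : 0 < tc) (hγ : 0 < γ)
    (V : ℝ → ℝ)
    (hcont : ContinuousOn V (Set.Ico 0 tc))
    (hdiff : ∀ t ∈ Set.Ioo (0 : ℝ) tc, DifferentiableAt ℝ V t)
    (hpos : ∀ t ∈ Set.Ico (0 : ℝ) tc, 0 < V t)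
    (hineq : ∀ t ∈ Set.Ioo (0 : ℝ) tc, deriv V t ≤ -(γ * (V t) ^ 2 / (tc - t))) :
    (∀ t ∈ Set.Ioo (0 : ℝ) tc,
        Real.log (tc / (tc - t)) ≤ (1 / γ) * (1 / V t - 1 / V 0)) ∧
    Filter.Tendsto V (nhdsWithin tc (Set.Iio tc)) (nhds 0) := by
  have hmono : MonotoneOn (fun t ↦ (V t)⁻¹ - γ * Real.log (tc / (tc - t))) (Ico 0 tc) := by
    rw [← interior_Ico] at hdiff hineq
    exact monotoneOn_inv_sub_mul_log_div_sub (convex_Ico 0 tc) htc.ne' right_notMem_Ico hcont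
      (fun t ht ↦ (hdiff t ht).hasDerivAt) (fun t ht ↦ (hpos t ht).ne') hineq
  have hzero : (0 : ℝ) ∈ Ico 0 tc := left_mem_Ico.2 htc
  constructor
  · intro t ht
    have hle := hmono hzero (Ioo_subset_Ico_self ht) ht.1.le
    simp only [sub_zero, div_self htc.ne', Real.log_one, mul_zero] at hle
    rw [one_div_mul_eq_div, le_div_iff₀' hγ, one_div, one_div]
    exact le_sub_comm.1 hle
  · have hnear : ∀ᶠ t in 𝓝[<] tc, t ∈ Ico 0 tc ∧ 0 ≤ t := by
      filter_upwards [Ico_mem_nhdsLT htc] with t ht using ⟨ht, ht.1⟩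
    exact tendsto_zero_of_monotoneOn_inv_sub hmono hzero hnear
      ((tendsto_log_div_sub_nhdsLT htc).const_mul_atTop hγ)
end

section
/- Let n ≥ 1, let 0 < α ≤ 1, γ > 0, ζ > 0, and let 0 < t_p < t_c < T. Suppose ε : ℝ → ℝⁿ is continuously differentiable on [t_c, T), ε(t_c) = 0, and at every t ∈ (t_c, T) with ε(t) ≠ 0 the derivative of ε satisfies the maintenance-phase FOZNN dynamics. Then ε(t) = 0 for every t ∈ [t_c, T). -/
/-!
Away from its zeros the error satisfies the scalar-rate equation `ε' = ρ • ε`, where the term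
`-ζ / ‖ε‖` can only help: `ρ` is bounded above by a continuous function of time. On a compact
interval, say `ρ ≤ K`. For a continuous linear functional `φ`, the function `exp (-K t) * φ (ε t)`
cannot increase where it is positive; starting at `0` it never becomes positive, since otherwise it
would have grown since its last zero. Taking `φ` to norm `ε t` gives `‖ε t‖ ≤ 0`.
-/

open Set

section DifferentialInequality

variable {f f' : ℝ → ℝ} {a b : ℝ}

theorem nonpos_of_hasDerivAt_nonpos_of_pos (hf : ContinuousOn f (Icc a b)) (ha : f a ≤ 0)
    (hderiv : ∀ t ∈ Ioo a b, 0 < f t → HasDerivAt f (f' t) t)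
    (hf' : ∀ t ∈ Ioo a b, 0 < f t → f' t ≤ 0) :
    ∀ t ∈ Icc a b, f t ≤ 0 := by
  rintro t ⟨hat, htb⟩
  by_contra! hpos
  have hf_at : ContinuousOn f (Icc a t) := hf.mono (Icc_subset_Icc_right htb)
  obtain ⟨s, ⟨⟨has, hst⟩, hs⟩, hs_last⟩ : ∃ s, IsGreatest (Icc a t ∩ f ⁻¹' Iic 0) s :=
    (isCompact_Icc.of_isClosed_subset
      (hf_at.preimage_isClosed_of_isClosed isClosed_Icc isClosed_Iic)
      inter_subset_left).exists_isGreatest ⟨a, left_mem_Icc.2 hat, ha⟩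
  have hpos_after : ∀ u ∈ Ioo s t, 0 < f u := fun u hu ↦ by
    by_contra! hu_nonpos
    exact (hs_last ⟨⟨has.trans hu.1.le, hu.2.le⟩, hu_nonpos⟩).not_gt hu.1
  have hsub : Ioo s t ⊆ Ioo a b := Ioo_subset_Ioo has htb
  have hanti : AntitoneOn f (Icc s t) :=
    antitoneOn_of_hasDerivWithinAt_nonpos (f' := f') (convex_Icc s t)
      (hf_at.mono (Icc_subset_Icc_left has))
      (fun u hu ↦ by
        rw [interior_Icc] at hu
        exact (hderiv u (hsub hu) (hpos_after u hu)).hasDerivWithinAt)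
      (fun u hu ↦ by
        rw [interior_Icc] at hu
        exact hf' u (hsub hu) (hpos_after u hu))
  exact ((hanti (left_mem_Icc.2 hst) (right_mem_Icc.2 hst) hst).trans hs).not_gt hpos

theorem nonpos_of_hasDerivAt_le_mul_of_pos {K : ℝ} (hf : ContinuousOn f (Icc a b)) (ha : f a ≤ 0)
    (hderiv : ∀ t ∈ Ioo a b, 0 < f t → HasDerivAt f (f' t) t)
    (hf' : ∀ t ∈ Ioo a b, 0 < f t → f' t ≤ K * f t) :
    ∀ t ∈ Icc a b, f t ≤ 0 := by
  have hweight (t : ℝ) :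
      HasDerivAt (fun s ↦ Real.exp (-K * s)) (Real.exp (-K * t) * -K) t := by
    simpa using ((hasDerivAt_id t).const_mul (-K)).exp
  have hweighted : ∀ t ∈ Icc a b, Real.exp (-K * t) * f t ≤ 0 := by
    refine nonpos_of_hasDerivAt_nonpos_of_pos (by fun_prop)
      (mul_nonpos_of_nonneg_of_nonpos (Real.exp_nonneg _) ha)
      (fun t ht hpos ↦ (hweight t).mul
        (hderiv t ht (pos_of_mul_pos_right hpos (Real.exp_nonneg _)))) fun t ht hpos ↦ ?_
    have hle := hf' t ht (pos_of_mul_pos_right hpos (Real.exp_nonneg _))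
    calc Real.exp (-K * t) * -K * f t + Real.exp (-K * t) * f' t
        = Real.exp (-K * t) * (f' t - K * f t) := by ring
      _ ≤ 0 := mul_nonpos_of_nonneg_of_nonpos (Real.exp_nonneg _) (sub_nonpos.2 hle)
  exact fun t ht ↦ nonpos_of_mul_nonpos_right (hweighted t ht) (Real.exp_pos _)

end DifferentialInequality

theorem eq_zero_of_hasDerivAt_smul_of_le {E : Type*} [NormedAddCommGroup E] [NormedSpace ℝ E]
    {x : ℝ → E} {ρ : ℝ → ℝ} {a b K : ℝ} (hx : ContinuousOn x (Icc a b)) (ha : x a = 0)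
    (hderiv : ∀ t ∈ Ioo a b, x t ≠ 0 → HasDerivAt x (ρ t • x t) t)
    (hρ : ∀ t ∈ Ioo a b, ρ t ≤ K) :
    ∀ t ∈ Icc a b, x t = 0 := by
  intro t ht
  obtain ⟨φ, -, hφ⟩ := exists_dual_vector'' ℝ (x t)
  have hφ_nonpos : φ (x t) ≤ 0 := by
    refine nonpos_of_hasDerivAt_le_mul_of_pos (f := fun s ↦ φ (x s))
      (f' := fun s ↦ ρ s * φ (x s)) (K := K)
      (φ.continuous.comp_continuousOn hx) (by simp [ha]) (fun s hs hpos ↦ ?_)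
      (fun s hs hpos ↦ mul_le_mul_of_nonneg_right (hρ s hs) hpos.le) t ht
    have hxs : x s ≠ 0 := fun h ↦ by simp [h] at hpos
    simpa only [Function.comp_def, map_smul, smul_eq_mul] using
      φ.hasFDerivAt.comp_hasDerivAt s (hderiv s hs hxs)
  exact norm_le_zero_iff.1 (hφ.symm.trans_le hφ_nonpos)

/-- The scalar rate `ρ` for which the maintenance-phase FOZNN dynamics at time `t`, with error of
norm `r`, reads `ε' = ρ • ε`. At `r = 0`, where no dynamics is imposed, the factor `r⁻¹` is `0`. -/
noncomputable def foznnRate (α γ ζ tp t r : ℝ) : ℝ :=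
  -((tp - t)⁻¹ + (ζ + γ * t ^ (α - 1) * r ^ 2 / (tp - t) ^ 2) * r⁻¹)

theorem foznnRate_le (α γ tp t : ℝ) {ζ r : ℝ} (hζ : 0 ≤ ζ) (hr : 0 ≤ r) :
    foznnRate α γ ζ tp t r ≤ -((tp - t)⁻¹ + γ * t ^ (α - 1) * r / (tp - t) ^ 2) := by
  have hcancel : r ^ 2 * r⁻¹ = r := by rw [sq, mul_self_mul_inv]
  calc foznnRate α γ ζ tp t r
      = -((tp - t)⁻¹ + γ * t ^ (α - 1) * (r ^ 2 * r⁻¹) / (tp - t) ^ 2) - ζ * r⁻¹ := by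
        unfold foznnRate; ring
    _ ≤ -((tp - t)⁻¹ + γ * t ^ (α - 1) * r / (tp - t) ^ 2) := by
        rw [hcancel]
        exact sub_le_self _ (mul_nonneg hζ (inv_nonneg.2 hr))

theorem exists_foznnRate_le {α γ ζ tp a b : ℝ} {r : ℝ → ℝ} (hζ : 0 ≤ ζ) (ha : 0 < a)
    (htp : tp < a) (hr : ContinuousOn r (Icc a b)) (hr0 : ∀ t ∈ Icc a b, 0 ≤ r t) :
    ∃ K, ∀ t ∈ Icc a b, foznnRate α γ ζ tp t (r t) ≤ K := by
  have htp_ne : ∀ t ∈ Icc a b, tp - t ≠ 0 := fun t ht ↦ (sub_neg.2 (htp.trans_le ht.1)).ne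
  have hsq_ne : ∀ t ∈ Icc a b, (tp - t) ^ 2 ≠ 0 := fun t ht ↦ pow_ne_zero 2 (htp_ne t ht)
  have hpow : ContinuousOn (fun t : ℝ ↦ t ^ (α - 1)) (Icc a b) :=
    continuousOn_id.rpow_const fun t ht ↦ .inl (ha.trans_le ht.1).ne'
  have hbound : ContinuousOn
      (fun t ↦ -((tp - t)⁻¹ + γ * t ^ (α - 1) * r t / (tp - t) ^ 2)) (Icc a b) := by
    fun_prop (disch := assumption)
  obtain ⟨K, hK⟩ := isCompact_Icc.bddAbove_image hbound
  exact ⟨K, fun t ht ↦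
    (foznnRate_le α γ tp t hζ (hr0 t ht)).trans (hK (mem_image_of_mem _ ht))⟩

theorem foznn_noise_free_maintenance_general
    {E : Type*} [NormedAddCommGroup E] [NormedSpace ℝ E] {α γ ζ tp tc T : ℝ}
    (hζ : 0 ≤ ζ) (htc : 0 < tc) (htptc : tp < tc) {ε : ℝ → E}
    (hcont : ContinuousOn ε (Ico tc T)) (hinit : ε tc = 0)
    (hdyn : ∀ t ∈ Ioo tc T, ε t ≠ 0 →
      HasDerivAt ε
        (-((tp - t)⁻¹ • ε t +
           ((ζ + γ * t ^ (α - 1) * ‖ε t‖ ^ 2 / (tp - t) ^ 2) * ‖ε t‖⁻¹) • ε t)) t) :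
    ∀ t ∈ Ico tc T, ε t = 0 := by
  rintro t ⟨htct, htT⟩
  have hcont_t : ContinuousOn ε (Icc tc t) := hcont.mono (Icc_subset_Ico_right htT)
  have hrate : ∀ s ∈ Ioo tc t, ε s ≠ 0 →
      HasDerivAt ε (foznnRate α γ ζ tp s ‖ε s‖ • ε s) s := fun s hs hεs ↦ by
    simpa only [foznnRate, neg_smul, add_smul] using hdyn s (Ioo_subset_Ioo_right htT.le hs) hεs
  obtain ⟨K, hK⟩ : ∃ K, ∀ s ∈ Icc tc t, foznnRate α γ ζ tp s ‖ε s‖ ≤ K :=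
    exists_foznnRate_le hζ htc htptc hcont_t.norm fun s _ ↦ norm_nonneg (ε s)
  exact eq_zero_of_hasDerivAt_smul_of_le hcont_t hinit hrate
    (fun s hs ↦ hK s (Ioo_subset_Icc_self hs)) t (right_mem_Icc.2 htct)

/-- If `ε` is continuously differentiable on `[t_c, T)`, `ε(t_c) = 0`, and at
every `t ∈ (t_c, T)` with `ε(t) ≠ 0` the derivative of `ε` satisfies the maintenance-phase
FOZNN dynamics, then `ε(t) = 0` for every `t ∈ [t_c, T)`. -/
theorem foznn_noise_free_maintenance
    (n : ℕ) (hn : 1 ≤ n) (α γ ζ tp tc T : ℝ)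
    (hα0 : 0 < α) (hα1 : α ≤ 1) (hγ : 0 < γ) (hζ : 0 < ζ)
    (htp : 0 < tp) (htptc : tp < tc) (htcT : tc < T)
    (ε : ℝ → EuclideanSpace ℝ (Fin n))
    (hC1 : ContDiffOn ℝ 1 ε (Set.Ico tc T))
    (hinit : ε tc = 0)
    (hdyn : ∀ t ∈ Set.Ioo tc T, ε t ≠ 0 →
      HasDerivAt ε
        (-((tp - t)⁻¹ • ε t +
           ((ζ + γ * t ^ (α - 1) * ‖ε t‖ ^ 2 / (tp - t) ^ 2) * ‖ε t‖⁻¹) • ε t)) t) :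
    ∀ t ∈ Set.Ico tc T, ε t = 0 := by
  exact foznn_noise_free_maintenance_general hζ.le (htp.trans htptc) htptc hC1.continuousOn hinit
    hdyn
end

section
/- Let t_c > 0, γ > 0, Δ ≥ 0. Let V : ℝ → ℝ be continuous on [0, t_c), nonnegative on [0, t_c), differentiable at every t ∈ (0, t_c), and satisfy V'(t) ≤ (Δ − γ V(t)²)/(t_c − t) for all t ∈ (0, t_c). Then V(t) ≤ max(V(0), √(Δ/γ)) for every t ∈ [0, t_c); consequently (t_c − t)·V(t) tends to 0 as t tends to t_c from the left. -/
/-! Let `C = max (V 0) √(Δ/γ)`. Where `V > C`, the bound `(Δ - γ V²)/(t_c - t)` on `V'` is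
nonpositive. If `V` exceeded `C` at some time `t`, it would therefore be nonincreasing between `t`
and the last earlier time at which `V ≤ C`, which is absurd. Hence `0 ≤ V ≤ C`, and the vanishing
factor `t_c - t` forces `(t_c - t) V(t) → 0`. -/

open Set Filter Topology

theorem le_of_deriv_nonpos_of_lt {f : ℝ → ℝ} {a b C : ℝ} (hab : a ≤ b)
    (hf : ContinuousOn f (Icc a b))
    (hdiff : ∀ x ∈ Ioo a b, C < f x → DifferentiableAt ℝ f x)
    (hderiv : ∀ x ∈ Ioo a b, C < f x → deriv f x ≤ 0) (ha : f a ≤ C) : f b ≤ C := by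
  have hclosed : IsClosed (Icc a b ∩ f ⁻¹' Iic C) :=
    hf.preimage_isClosed_of_isClosed isClosed_Icc isClosed_Iic
  obtain ⟨s, ⟨hs, hfs⟩, hlast⟩ :=
    (isCompact_Icc.of_isClosed_subset hclosed inter_subset_left).exists_isGreatest
      ⟨a, left_mem_Icc.2 hab, ha⟩
  have habove : ∀ x ∈ Ioo s b, x ∈ Ioo a b ∧ C < f x := fun x hx ↦
    have hxab : x ∈ Ioo a b := ⟨hs.1.trans_lt hx.1, hx.2⟩
    ⟨hxab, lt_of_not_ge fun hfx ↦ hx.1.not_ge (hlast ⟨Ioo_subset_Icc_self hxab, hfx⟩)⟩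
  have hanti : AntitoneOn f (Icc s b) := by
    refine antitoneOn_of_deriv_nonpos (convex_Icc s b) (hf.mono (Icc_subset_Icc_left hs.1))
      (fun x hx ↦ ?_) (fun x hx ↦ ?_) <;>
      obtain ⟨hxab, hCx⟩ := habove x (interior_Icc.subset hx)
    · exact (hdiff x hxab hCx).differentiableWithinAt
    · exact hderiv x hxab hCx
  exact (hanti (left_mem_Icc.2 hs.2) (right_mem_Icc.2 hs.2) hs.2).trans hfs

theorem sub_mul_sq_nonpos_of_sqrt_div_le {γ Δ v : ℝ} (hγ : 0 < γ) (hv : √(Δ / γ) ≤ v) :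
    Δ - γ * v ^ 2 ≤ 0 := by
  have hsq : Δ / γ ≤ v ^ 2 := (Real.sqrt_le_iff.1 hv).2
  exact sub_nonpos.2 ((div_le_iff₀' hγ).1 hsq)

theorem le_max_sqrt_of_deriv_le_riccati {V k : ℝ → ℝ} {γ Δ a b : ℝ} (hγ : 0 < γ) (hab : a ≤ b)
    (hk : ∀ t ∈ Ioo a b, 0 ≤ k t) (hcont : ContinuousOn V (Icc a b))
    (hdiff : ∀ t ∈ Ioo a b, DifferentiableAt ℝ V t)
    (hderiv : ∀ t ∈ Ioo a b, deriv V t ≤ k t * (Δ - γ * V t ^ 2)) :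
    V b ≤ max (V a) √(Δ / γ) := by
  refine le_of_deriv_nonpos_of_lt hab hcont (fun t ht _ ↦ hdiff t ht) (fun t ht hVt ↦ ?_)
    (le_max_left _ _)
  have hsqrt : √(Δ / γ) ≤ V t := (le_max_right _ _).trans hVt.le
  exact (hderiv t ht).trans
    (mul_nonpos_of_nonneg_of_nonpos (hk t ht) (sub_mul_sq_nonpos_of_sqrt_div_le hγ hsqrt))

/-- Scalar comparison lemma: if `V ≥ 0` is continuous on `[0, t_c)`,
differentiable on `(0, t_c)` with `V'(t) ≤ (Δ − γ V(t)²)/(t_c − t)`, then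
`V(t) ≤ max(V(0), √(Δ/γ))` on `[0, t_c)`, and consequently `(t_c − t)·V(t) → 0`
as `t → t_c⁻`. -/
theorem scalar_comparison_noisy
    (tc γ Δ : ℝ) (htc : 0 < tc) (hγ : 0 < γ) (hΔ : 0 ≤ Δ)
    (V : ℝ → ℝ)
    (hcont : ContinuousOn V (Set.Ico 0 tc))
    (hnonneg : ∀ t ∈ Set.Ico (0 : ℝ) tc, 0 ≤ V t)
    (hdiff : ∀ t ∈ Set.Ioo (0 : ℝ) tc, DifferentiableAt ℝ V t)
    (hineq : ∀ t ∈ Set.Ioo (0 : ℝ) tc, deriv V t ≤ (Δ - γ * (V t) ^ 2) / (tc - t)) :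
    (∀ t ∈ Set.Ico (0 : ℝ) tc, V t ≤ max (V 0) (Real.sqrt (Δ / γ))) ∧
    Filter.Tendsto (fun t => (tc - t) * V t) (nhdsWithin tc (Set.Iio tc)) (nhds 0) := by
  have hbound : ∀ t ∈ Ico 0 tc, V t ≤ max (V 0) √(Δ / γ) := by
    intro t ht
    have hsub : Ioo 0 t ⊆ Ioo 0 tc := Ioo_subset_Ioo_right ht.2.le
    refine le_max_sqrt_of_deriv_le_riccati (k := fun s ↦ (tc - s)⁻¹) hγ ht.1
      (fun s hs ↦ inv_nonneg.2 (sub_nonneg.2 (hsub hs).2.le))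
      (hcont.mono (Icc_subset_Ico_right ht.2)) (fun s hs ↦ hdiff s (hsub hs)) (fun s hs ↦ ?_)
    simpa only [div_eq_inv_mul] using hineq s (hsub hs)
  have hfactor : Tendsto (fun t ↦ tc - t) (𝓝[<] tc) (𝓝 0) :=
    ((continuous_sub_left tc).tendsto' tc 0 (sub_self tc)).mono_left nhdsWithin_le_nhds
  refine ⟨hbound, hfactor.zero_mul_isBoundedUnder_le <|
    isBoundedUnder_of_eventually_le (a := max (V 0) √(Δ / γ)) ?_⟩
  filter_upwards [Ico_mem_nhdsLT htc] with t ht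
  exact (abs_of_nonneg (hnonneg t ht)).trans_le (hbound t ht)
end

section
/- Let n ≥ 1, let 0 < α ≤ 1, γ > 0, and let 0 ≤ Δ < ζ, 0 < t_p < t_c < T. Let δ : ℝ → ℝⁿ satisfy ‖δ(t)‖ ≤ Δ for all t. Suppose ε : ℝ → ℝⁿ is continuously differentiable on [t_c, T), ε(t_c) = 0, and at every t ∈ (t_c, T) with ε(t) ≠ 0, ε is differentiable at t with ε'(t) equal to the maintenance-phase FOZNN right-hand side plus δ(t). Then ε(t) = 0 for every t ∈ [t_c, T). -/
/-!
In the moving scale `z = ε / (t - t_p)` the drift `ε / (t - t_p)` disappears: what is left of `z'`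
is a radial contraction of speed at least `ζ / |t - t_p|` and a noise of size at most
`Δ / |t - t_p|`.
The triangle inequality then makes the upper right derivative of `‖z‖` nonpositive wherever
`z ≠ 0`, so `‖z‖` cannot leave the value `0`.
-/

open Filter Set Topology

-- Not a case of `image_le_of_liminf_right_slope_le_deriv_boundary`, which bounds the right slopes
-- everywhere: here they may be infinite wherever `φ t ≤ m`.
theorem image_le_of_liminf_right_slope_nonpos_of_lt {φ : ℝ → ℝ} {a b m : ℝ}
    (hφ : ContinuousOn φ (Icc a b)) (ha : φ a ≤ m)
    (hslope : ∀ t ∈ Ioo a b, m < φ t → ∀ r > 0, ∃ᶠ s in 𝓝[>] t, slope φ t s < r) :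
    ∀ t ∈ Icc a b, φ t ≤ m := by
  suffices tilted : ∀ η > 0, Icc a b ⊆ {t | φ t ≤ m + η * (t - a + 1)} by
    refine fun t ht => le_of_forall_pos_le_add fun c hc => ?_
    have hpos : 0 < t - a + 1 := by linarith [ht.1]
    simpa only [mem_ofPred_eq, div_mul_cancel₀ c hpos.ne'] using
      tilted (c / (t - a + 1)) (by positivity) ht
  intro η hη
  have hclosed : IsClosed ({t | φ t ≤ m + η * (t - a + 1)} ∩ Icc a b) := by
    rw [inter_comm]
    exact isClosed_Icc.isClosed_le hφ (by fun_prop)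
  have hstart : φ a < m + η * (a - a + 1) := by linarith
  refine hclosed.Icc_subset_of_forall_exists_gt hstart.le ?_
  rintro t ⟨hle : φ t ≤ m + η * (t - a + 1), hat, htb⟩ y (hty : t < y)
  rcases hle.lt_or_eq with hlt | heq
  · have hbelow : ∀ᶠ s in 𝓝[>] t, φ s < m + η * (s - a + 1) := by
      have hcont : ContinuousWithinAt φ (Ioi t) t :=
        (hφ t ⟨hat, htb.le⟩).mono_of_mem_nhdsWithin (Icc_mem_nhdsGT_of_mem ⟨hat, htb⟩)
      exact hcont.eventually_lt
        (by fun_prop : Continuous fun s => m + η * (s - a + 1)).continuousWithinAt hlt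
    obtain ⟨s, hs, hmem⟩ := (hbelow.and (Ioc_mem_nhdsGT hty)).exists
    exact ⟨s, hs.le, hmem⟩
  · have hat' : a < t := hat.lt_of_ne fun h => hstart.ne (h ▸ heq)
    have hmt : m < φ t := by rw [heq]; nlinarith
    obtain ⟨s, hs, hmem⟩ :=
      ((hslope t ⟨hat', htb⟩ hmt η hη).and_eventually (Ioc_mem_nhdsGT hty)).exists
    rw [slope_def_field, div_lt_iff₀ (sub_pos.2 hmem.1)] at hs
    exact ⟨s, by simp only [mem_ofPred_eq]; linarith, hmem⟩

section NormedSpace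

variable {E : Type*} [NormedAddCommGroup E] [NormedSpace ℝ E]

theorem eventually_norm_add_smul_neg_smul_add_le {x w : E} {c : ℝ} (hw : ‖w‖ ≤ c * ‖x‖) :
    ∀ᶠ h in 𝓝[>] (0 : ℝ), ‖x + h • (-(c • x) + w)‖ ≤ ‖x‖ := by
  have hsmall : ∀ᶠ h in 𝓝[>] (0 : ℝ), h * c < 1 :=
    nhdsWithin_le_nhds <| (by fun_prop : Continuous fun h : ℝ => h * c).continuousAt.eventually_lt
      continuousAt_const (by simp)
  filter_upwards [hsmall, self_mem_nhdsWithin] with h hhc (hh : 0 < h)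
  calc ‖x + h • (-(c • x) + w)‖ = ‖(1 - h * c) • x + h • w‖ := by congr 1; module
    _ ≤ (1 - h * c) * ‖x‖ + h * ‖w‖ := by
      simpa only [norm_smul, Real.norm_of_nonneg hh.le, Real.norm_of_nonneg (sub_pos.2 hhc).le]
        using norm_add_le ((1 - h * c) • x) (h • w)
    _ ≤ (1 - h * c) * ‖x‖ + h * (c * ‖x‖) := by gcongr
    _ = ‖x‖ := by ring

theorem eventually_slope_norm_lt_of_norm_add_smul_le {f : ℝ → E} {v : E} {t r : ℝ}
    (hf : HasDerivWithinAt f v (Ici t) t)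
    (hv : ∀ᶠ h in 𝓝[>] (0 : ℝ), ‖f t + h • v‖ ≤ ‖f t‖) (hr : 0 < r) :
    ∀ᶠ s in 𝓝[>] t, slope (fun s => ‖f s‖) t s < r := by
  have hshift : Tendsto (fun s => s - t) (𝓝[>] t) (𝓝[>] 0) :=
    tendsto_nhdsWithin_iff.2 ⟨tendsto_nhdsWithin_of_tendsto_nhds <|
      (continuous_sub_right t).tendsto' t 0 (sub_self t),
      eventually_mem_nhdsWithin.mono fun _ hs => mem_Ioi.2 (sub_pos.2 hs)⟩
  have hclose : ∀ᶠ s in 𝓝[>] t, ‖slope f t s - v‖ < r := by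
    simpa only [dist_eq_norm] using Metric.tendsto_nhds.1
      ((hasDerivWithinAt_iff_tendsto_slope' self_notMem_Ioi).1 hf.Ioi_of_Ici) r hr
  filter_upwards [hclose, hshift.eventually hv, self_mem_nhdsWithin] with s hs hvs (hts : t < s)
  have hpos : 0 < s - t := sub_pos.2 hts
  rw [slope_def_field, div_lt_iff₀ hpos, sub_lt_iff_lt_add]
  calc ‖f s‖ = ‖(s - t) • (slope f t s - v) + (f t + (s - t) • v)‖ := by
        rw [smul_sub, sub_smul_slope, vsub_eq_sub]; congr 1; module
    _ ≤ (s - t) * ‖slope f t s - v‖ + ‖f t + (s - t) • v‖ := by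
        simpa only [norm_smul, Real.norm_of_nonneg hpos.le] using
          norm_add_le ((s - t) • (slope f t s - v)) (f t + (s - t) • v)
    _ < r * (s - t) + ‖f t‖ := by
        rw [mul_comm r]
        exact add_lt_add_of_lt_of_le (mul_lt_mul_of_pos_left hs hpos) hvs

theorem hasDerivWithinAt_inv_sub_smul {f : ℝ → E} {v : E} {s : Set ℝ} {p t : ℝ} (hpt : t ≠ p)
    (hf : HasDerivWithinAt f ((t - p)⁻¹ • f t + v) s t) :
    HasDerivWithinAt (fun u => (u - p)⁻¹ • f u) ((t - p)⁻¹ • v) s t := by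
  have hinv : HasDerivWithinAt (fun u => (u - p)⁻¹) (-((t - p)⁻¹ * (t - p)⁻¹)) s t :=
    (((hasDerivWithinAt_id t s).sub_const p).fun_inv (sub_ne_zero.2 hpt)).congr_deriv <| by
      simp only [id]; field_simp
  exact (hinv.smul hf).congr_deriv (by module)

theorem norm_le_of_eventually_norm_add_smul_le {f f' : ℝ → E} {a b m : ℝ}
    (hf : ContinuousOn f (Icc a b)) (ha : ‖f a‖ ≤ m)
    (hf' : ∀ t ∈ Ioo a b, m < ‖f t‖ → HasDerivWithinAt f (f' t) (Ici t) t)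
    (hle : ∀ t ∈ Ioo a b, m < ‖f t‖ → ∀ᶠ h in 𝓝[>] (0 : ℝ), ‖f t + h • f' t‖ ≤ ‖f t‖) :
    ∀ t ∈ Icc a b, ‖f t‖ ≤ m :=
  image_le_of_liminf_right_slope_nonpos_of_lt hf.norm ha fun t ht hmt _ hr =>
    (eventually_slope_norm_lt_of_norm_add_smul_le (hf' t ht hmt) (hle t ht hmt) hr).frequently

-- `k t` stands for the gain `ζ + γ t ^ (α - 1) ‖ε t‖² / (tp - t)²` along the trajectory `ε`.
-- For `T ≤ tp` the preset time `tp` has not been reached, and the drift is itself a contraction.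
theorem foznn_noisy_maintenance_general {k : ℝ → ℝ} {δ ε : ℝ → E} {tp tc T : ℝ}
    (htp : tp ∉ Ico tc T) (hδ : ∀ t ∈ Ioo tc T, ‖δ t‖ ≤ k t)
    (hcont : ContinuousOn ε (Ico tc T)) (hinit : ε tc = 0)
    (hdyn : ∀ t ∈ Ioo tc T, ε t ≠ 0 →
      HasDerivWithinAt ε (-((tp - t)⁻¹ • ε t + (k t * ‖ε t‖⁻¹) • ε t) + δ t) (Ici t) t) :
    ∀ t ∈ Ico tc T, ε t = 0 := by
  intro T' hT'
  have hne : ∀ t ∈ Icc tc T', t - tp ≠ 0 := fun t ht =>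
    sub_ne_zero.2 fun h => htp (h ▸ Icc_subset_Ico_right hT'.2 ht)
  have hIoo : Ioo tc T' ⊆ Ioo tc T := Ioo_subset_Ioo_right hT'.2.le
  let z : ℝ → E := fun t => (t - tp)⁻¹ • ε t
  let v : ℝ → E := fun t => -((k t * ‖ε t‖⁻¹) • ε t) + δ t
  have hε_ne : ∀ t, 0 < ‖z t‖ → ε t ≠ 0 := fun t hzt =>
    (smul_ne_zero_iff.1 (norm_pos_iff.1 hzt)).2
  have hz : ContinuousOn z (Icc tc T') :=
    (ContinuousOn.inv₀ (by fun_prop) hne).smul (hcont.mono (Icc_subset_Ico_right hT'.2))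
  have hz' : ∀ t ∈ Ioo tc T', 0 < ‖z t‖ → HasDerivWithinAt z ((t - tp)⁻¹ • v t) (Ici t) t := by
    refine fun t ht hzt => hasDerivWithinAt_inv_sub_smul
      (sub_ne_zero.1 (hne t (Ioo_subset_Icc_self ht)))
      ((hdyn t (hIoo ht) (hε_ne t hzt)).congr_deriv ?_)
    rw [← neg_sub t tp, inv_neg]
    module
  have hle : ∀ t ∈ Ioo tc T', 0 < ‖z t‖ →
      ∀ᶠ h in 𝓝[>] (0 : ℝ), ‖z t + h • (t - tp)⁻¹ • v t‖ ≤ ‖z t‖ := by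
    intro t ht hzt
    have hnoise : ‖δ t‖ ≤ k t * ‖ε t‖⁻¹ * ‖ε t‖ := by
      rw [inv_mul_cancel_right₀ (norm_ne_zero_iff.2 (hε_ne t hzt))]
      exact hδ t (hIoo ht)
    filter_upwards [eventually_norm_add_smul_neg_smul_add_le hnoise] with h hh
    rw [smul_comm h, ← smul_add, norm_smul, norm_smul]
    gcongr
  have hT'_mem : T' ∈ Icc tc T' := right_mem_Icc.2 hT'.1
  have hzT' : ‖z T'‖ ≤ 0 :=
    norm_le_of_eventually_norm_add_smul_le hz (by simp [z, hinit]) hz' hle T' hT'_mem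
  exact (smul_eq_zero_iff_right (inv_ne_zero (hne T' hT'_mem))).1 (norm_le_zero_iff.1 hzT')

end NormedSpace

/-- If `ε` is continuously differentiable on `[t_c, T)`, `ε(t_c) = 0`, and at
every `t ∈ (t_c, T)` with `ε(t) ≠ 0` the derivative of `ε` equals the maintenance-phase
FOZNN right-hand side plus a noise `δ(t)` bounded by `Δ < ζ`, then `ε(t) = 0` on `[t_c, T)`. -/
theorem foznn_noisy_maintenance
    (n : ℕ) (hn : 1 ≤ n) (α γ ζ Δ tp tc T : ℝ)
    (hα0 : 0 < α) (hα1 : α ≤ 1) (hγ : 0 < γ)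
    (hΔ0 : 0 ≤ Δ) (hΔζ : Δ < ζ)
    (htp : 0 < tp) (htptc : tp < tc) (htcT : tc < T)
    (δ : ℝ → EuclideanSpace ℝ (Fin n)) (hδ : ∀ t, ‖δ t‖ ≤ Δ)
    (ε : ℝ → EuclideanSpace ℝ (Fin n))
    (hC1 : ContDiffOn ℝ 1 ε (Set.Ico tc T))
    (hinit : ε tc = 0)
    (hdyn : ∀ t ∈ Set.Ioo tc T, ε t ≠ 0 →
      HasDerivAt ε
        (-((tp - t)⁻¹ • ε t +
           ((ζ + γ * t ^ (α - 1) * ‖ε t‖ ^ 2 / (tp - t) ^ 2) * ‖ε t‖⁻¹) • ε t) + δ t) t) :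
    ∀ t ∈ Set.Ico tc T, ε t = 0 := by
  refine foznn_noisy_maintenance_general (fun h => h.1.not_gt htptc) (fun t ht => ?_)
    hC1.continuousOn hinit fun t ht h0 => (hdyn t ht h0).hasDerivWithinAt
  have ht0 : 0 < t := (htp.trans htptc).trans ht.1
  exact (hδ t).trans (hΔζ.le.trans (le_add_of_nonneg_right (by positivity)))
end

section
/- Let n ≥ 1, let 0 < α ≤ 1, γ > 0, t_c > 0, and let ε : ℝ → ℝⁿ be continuous on [0, t_c) and follow the noise-free FOZNN convergence-phase dynamics on (0, t_c). Then for every t ∈ (0, t_c), ‖ε(t)‖ ≤ ‖ε(0)‖ · (t_c − t)/t_c. -/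
/-!
The function `t ↦ tc - t` solves `φ' = -φ / (tc - t)`. The error solves the linear equation
`ε' = c(t) ε` along its own trajectory, with `c(t) ≤ -1 / (tc - t)` because the gain
`(t / tc) ^ (α - 1)` is at least `1` for `α ≤ 1`. Hence the quotient `ε(t) / (tc - t)` solves a
linear equation with nonpositive scalar rate, so its norm does not increase.
-/

section LinearDecay

variable {E : Type*} [NormedAddCommGroup E] [NormedSpace ℝ E] {D : Set ℝ}

theorem antitoneOn_abs_of_hasDerivAt_mul_nonpos {u k : ℝ → ℝ} (hD : Convex ℝ D)
    (hu : ContinuousOn u D) (hu' : ∀ t ∈ interior D, HasDerivAt u (k t * u t) t)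
    (hk : ∀ t ∈ interior D, k t ≤ 0) : AntitoneOn (fun t ↦ |u t|) D := by
  have hsq' : ∀ t ∈ interior D, HasDerivAt (fun t ↦ u t ^ 2) (2 * k t * u t ^ 2) t :=
    fun t ht ↦ ((hu' t ht).fun_pow 2).congr_deriv (by push_cast; ring)
  have hsq : AntitoneOn (fun t ↦ u t ^ 2) D :=
    antitoneOn_of_hasDerivWithinAt_nonpos hD (hu.pow 2)
      (fun t ht ↦ (hsq' t ht).hasDerivWithinAt)
      fun t ht ↦ mul_nonpos_of_nonpos_of_nonneg (by linarith [hk t ht]) (sq_nonneg _)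
  exact fun s hs t ht hst ↦ sq_le_sq.mp (hsq hs ht hst)

theorem antitoneOn_norm_of_hasDerivAt_smul_nonpos {x : ℝ → E} {k : ℝ → ℝ} (hD : Convex ℝ D)
    (hx : ContinuousOn x D) (hx' : ∀ t ∈ interior D, HasDerivAt x (k t • x t) t)
    (hk : ∀ t ∈ interior D, k t ≤ 0) : AntitoneOn (fun t ↦ ‖x t‖) D := by
  intro s hs t ht hst
  -- The norm need not be differentiable, but every functional of `x` solves the scalar equation.
  refine NormedSpace.norm_le_dual_bound ℝ (x t) (norm_nonneg (x s)) fun f ↦ ?_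
  have hf' : ∀ r ∈ interior D, HasDerivAt (fun r ↦ f (x r)) (k r * f (x r)) r := fun r hr ↦
    (f.hasFDerivAt.comp_hasDerivAt r (hx' r hr)).congr_deriv (map_smul f (k r) (x r))
  calc ‖f (x t)‖ ≤ ‖f (x s)‖ := antitoneOn_abs_of_hasDerivAt_mul_nonpos hD
        (f.continuous.comp_continuousOn hx) hf' hk hs ht hst
    _ ≤ ‖f‖ * ‖x s‖ := f.le_opNorm (x s)
    _ = ‖x s‖ * ‖f‖ := mul_comm _ _

theorem hasDerivAt_inv_smul {x : ℝ → E} {φ : ℝ → ℝ} {c φ' t : ℝ}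
    (hx : HasDerivAt x (c • x t) t) (hφ : HasDerivAt φ φ' t) (hφt : φ t ≠ 0) :
    HasDerivAt (fun t ↦ (φ t)⁻¹ • x t) ((c - φ' / φ t) • (φ t)⁻¹ • x t) t := by
  refine ((hφ.fun_inv hφt).fun_smul hx).congr_deriv ?_
  rw [smul_smul, smul_smul, ← add_smul]
  congr 1
  field_simp
  ring

theorem antitoneOn_norm_div_of_hasDerivAt_smul {x : ℝ → E} {c φ φ' : ℝ → ℝ} (hD : Convex ℝ D)
    (hx : ContinuousOn x D) (hx' : ∀ t ∈ interior D, HasDerivAt x (c t • x t) t)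
    (hφ : ContinuousOn φ D) (hφ' : ∀ t ∈ interior D, HasDerivAt φ (φ' t) t)
    (hφ_pos : ∀ t ∈ D, 0 < φ t) (hc : ∀ t ∈ interior D, c t * φ t ≤ φ' t) :
    AntitoneOn (fun t ↦ ‖x t‖ / φ t) D := by
  have hφ_int : ∀ t ∈ interior D, 0 < φ t := fun t ht ↦ hφ_pos t (interior_subset ht)
  have hanti : AntitoneOn (fun t ↦ ‖(φ t)⁻¹ • x t‖) D :=
    antitoneOn_norm_of_hasDerivAt_smul_nonpos (k := fun t ↦ c t - φ' t / φ t) hD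
      ((hφ.inv₀ fun t ht ↦ (hφ_pos t ht).ne').smul hx)
      (fun t ht ↦ hasDerivAt_inv_smul (hx' t ht) (hφ' t ht) (hφ_int t ht).ne')
      fun t ht ↦ sub_nonpos.mpr ((le_div_iff₀ (hφ_int t ht)).mpr (hc t ht))
  refine hanti.congr fun t ht ↦ ?_
  simp only [norm_smul, norm_inv, Real.norm_of_nonneg (hφ_pos t ht).le, inv_mul_eq_div]

end LinearDecay

theorem one_le_rpow_div_rpow_of_nonpos_s11 {s t p : ℝ} (hs : 0 < s) (hst : s ≤ t) (hp : p ≤ 0) :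
    1 ≤ s ^ p / t ^ p :=
  (one_le_div (Real.rpow_pos_of_pos (hs.trans_le hst) p)).mpr
    (Real.rpow_le_rpow_of_nonpos hs hst hp)

theorem neg_mul_one_div_add_mul_le_neg_one {r q p : ℝ} (hr : 1 ≤ r) (hq : 0 ≤ q) (hp : 0 < p) :
    -r * (1 / p + q) * p ≤ -1 := by
  have hsum : 1 ≤ 1 + q * p := le_add_of_nonneg_right (mul_nonneg hq hp.le)
  calc -r * (1 / p + q) * p = -(r * (1 + q * p)) := by field_simp
    _ ≤ -1 := neg_le_neg (one_le_mul_of_one_le_of_one_le hr hsum)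

theorem foznn_noise_free_norm_bound_general
    {E : Type*} [NormedAddCommGroup E] [NormedSpace ℝ E] {α γ tc : ℝ} (hα : α ≤ 1) (hγ : 0 ≤ γ)
    {ε : ℝ → E} (hcont : ContinuousOn ε (Set.Ico 0 tc))
    (hdyn : ∀ t ∈ Set.Ioo (0 : ℝ) tc, HasDerivAt ε
      ((-(t ^ (α - 1) / tc ^ (α - 1)) *
        (1 / (tc - t) + γ * ‖ε t‖ / (tc - t) ^ 2)) • ε t) t) :
    ∀ t ∈ Set.Ioo (0 : ℝ) tc, ‖ε t‖ ≤ ‖ε 0‖ * (tc - t) / tc := by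
  intro t ⟨ht0, httc⟩
  have hanti : AntitoneOn (fun s ↦ ‖ε s‖ / (tc - s)) (Set.Ico 0 tc) := by
    refine antitoneOn_norm_div_of_hasDerivAt_smul (φ' := fun _ ↦ -1) (convex_Ico 0 tc) hcont
      (by rwa [interior_Ico]) (by fun_prop) (fun s _ ↦ (hasDerivAt_id s).const_sub tc)
      (fun s hs ↦ sub_pos.mpr hs.2) ?_
    rw [interior_Ico]
    intro s ⟨hs0, hstc⟩
    exact neg_mul_one_div_add_mul_le_neg_one
      (one_le_rpow_div_rpow_of_nonpos_s11 hs0 hstc.le (sub_nonpos.mpr hα)) (by positivity)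
      (sub_pos.mpr hstc)
  have hquot : ‖ε t‖ / (tc - t) ≤ ‖ε 0‖ / tc := by
    simpa only [sub_zero] using hanti ⟨le_rfl, ht0.trans httc⟩ ⟨ht0.le, httc⟩ ht0.le
  calc ‖ε t‖ ≤ ‖ε 0‖ / tc * (tc - t) := (div_le_iff₀ (sub_pos.mpr httc)).mp hquot
    _ = ‖ε 0‖ * (tc - t) / tc := div_mul_eq_mul_div _ _ _

/-- For `ε` continuous on `[0, t_c)` following the noise-free FOZNN
convergence-phase dynamics on `(0, t_c)`, for every `t ∈ (0, t_c)` one has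
`‖ε(t)‖ ≤ ‖ε(0)‖ · (t_c − t)/t_c`. -/
theorem foznn_noise_free_norm_bound
    (n : ℕ) (hn : 1 ≤ n) (α γ tc : ℝ)
    (hα0 : 0 < α) (hα1 : α ≤ 1) (hγ : 0 < γ) (htc : 0 < tc)
    (ε : ℝ → EuclideanSpace ℝ (Fin n))
    (hcont : ContinuousOn ε (Set.Ico 0 tc))
    (hdyn : ∀ t ∈ Set.Ioo (0 : ℝ) tc, ε t ≠ 0 ∧
      HasDerivAt ε
        ((-(t ^ (α - 1) / tc ^ (α - 1)) *
          (1 / (tc - t) + γ * ‖ε t‖ / (tc - t) ^ 2)) • ε t) t) :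
    ∀ t ∈ Set.Ioo (0 : ℝ) tc, ‖ε t‖ ≤ ‖ε 0‖ * (tc - t) / tc :=
  foznn_noise_free_norm_bound_general hα1 hγ.le hcont fun t ht ↦ (hdyn t ht).2
end

section
/- Let 0 < α ≤ 1 and t > 0, and let f, g : ℝ → ℝ be α-differentiable at t with conformable fractional derivatives L_f and L_g respectively. Then the product f·g is α-differentiable at t with conformable fractional derivative f(t)·L_g + g(t)·L_f. -/
/-- `f` has conformable fractional derivative `L` of order `α` at `t`:
`(f(t + s·t^{1−α}) − f(t))/s → L` as `s → 0` (punctured limit). -/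
def HasConformableDerivAt (α : ℝ) (f : ℝ → ℝ) (L t : ℝ) : Prop :=
  Filter.Tendsto (fun s => (f (t + s * t ^ (1 - α)) - f t) / s)
    (nhdsWithin 0 {(0 : ℝ)}ᶜ) (nhds L)

theorem hasConformableDerivAt_iff_hasDerivAt {α t L : ℝ} {f : ℝ → ℝ} :
    HasConformableDerivAt α f L t ↔ HasDerivAt (fun s => f (t + s * t ^ (1 - α))) L 0 := by
  simp only [HasConformableDerivAt, hasDerivAt_iff_tendsto_slope_zero, zero_add, zero_mul, add_zero,
    smul_eq_mul, div_eq_inv_mul]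

theorem conformable_deriv_mul_general {α t Lf Lg : ℝ} {f g : ℝ → ℝ}
    (hf : HasConformableDerivAt α f Lf t) (hg : HasConformableDerivAt α g Lg t) :
    HasConformableDerivAt α (fun x => f x * g x) (f t * Lg + g t * Lf) t := by
  rw [hasConformableDerivAt_iff_hasDerivAt] at hf hg ⊢
  refine (hf.fun_mul hg).congr_deriv ?_
  simp only [zero_mul, add_zero]
  ring

/-- Leibniz rule for the conformable fractional derivative:
if `f` and `g` are `α`-differentiable at `t > 0` with conformable derivatives `Lf` and `Lg`,
then `f·g` is `α`-differentiable at `t` with conformable derivative `f(t)·Lg + g(t)·Lf`. -/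
theorem conformable_deriv_mul
    (α t : ℝ) (hα0 : 0 < α) (hα1 : α ≤ 1) (ht : 0 < t)
    (f g : ℝ → ℝ) (Lf Lg : ℝ)
    (hf : HasConformableDerivAt α f Lf t)
    (hg : HasConformableDerivAt α g Lg t) :
    HasConformableDerivAt α (fun x => f x * g x) (f t * Lg + g t * Lf) t :=
  conformable_deriv_mul_general hf hg
end

section
/- Let 0 < α ≤ 1 and t > 0, and let f : ℝ → ℝ be α-differentiable at t. Then f is continuous at t. -/
/-!
The conformable quotient is the ordinary difference quotient at `0` of
`s ↦ f (t + s * t ^ (1 - α))`. Since `t ^ (1 - α) ≠ 0` for `t > 0`, this reparametrization is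
invertible, so `f` is differentiable at `t` in the usual sense, with derivative `L / t ^ (1 - α)`.
-/

theorem hasDerivAt_of_comp_add_mul {𝕜 F : Type*} [NontriviallyNormedField 𝕜]
    [NormedAddCommGroup F] [NormedSpace 𝕜 F] {f : 𝕜 → F} {f' : F} {a c x : 𝕜} (hc : c ≠ 0)
    (hf : HasDerivAt (fun s => f (a + s * c)) f' x) : HasDerivAt f (c⁻¹ • f') (a + x * c) := by
  have hinv : HasDerivAt (fun y => (y - a) / c) c⁻¹ (a + x * c) := by
    simpa using ((hasDerivAt_id (a + x * c)).sub_const a).div_const c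
  have hcomp := hf.scomp_of_eq (a + x * c) hinv (by simp [hc])
  simpa [Function.comp_def, hc] using hcomp

theorem hasConformableDerivAt_iff_hasDerivAt_comp {α L t : ℝ} {f : ℝ → ℝ} :
    HasConformableDerivAt α f L t ↔ HasDerivAt (fun s => f (t + s * t ^ (1 - α))) L 0 := by
  simp [HasConformableDerivAt, hasDerivAt_iff_tendsto_slope_zero, div_eq_inv_mul]

theorem HasConformableDerivAt.hasDerivAt {α L t : ℝ} {f : ℝ → ℝ}
    (hf : HasConformableDerivAt α f L t) (ht : 0 < t) :
    HasDerivAt f (L / t ^ (1 - α)) t := by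
  have hscale : t ^ (1 - α) ≠ 0 := (Real.rpow_pos_of_pos ht _).ne'
  simpa [div_eq_inv_mul] using
    hasDerivAt_of_comp_add_mul hscale (hasConformableDerivAt_iff_hasDerivAt_comp.mp hf)

theorem continuousAt_of_conformable_deriv_general {α L t : ℝ} {f : ℝ → ℝ} (ht : 0 < t)
    (hf : HasConformableDerivAt α f L t) : ContinuousAt f t :=
  (hf.hasDerivAt ht).continuousAt

/-- If `0 < α ≤ 1`, `t > 0`, and `f` is `α`-differentiable at `t`
(i.e. its conformable fractional derivative of order `α` exists at `t`),
then `f` is continuous at `t`. -/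
theorem continuousAt_of_conformable_deriv
    (α t : ℝ) (hα0 : 0 < α) (hα1 : α ≤ 1) (ht : 0 < t)
    (f : ℝ → ℝ) (L : ℝ) (hf : HasConformableDerivAt α f L t) :
    ContinuousAt f t :=
  continuousAt_of_conformable_deriv_general ht hf
end

section
/- Let τ > 0. For all real numbers u and v, the perturbed Fischer–Burmeister function vanishes at (u, v), i.e. u + v − √(u² + v² + τ) = 0, if and only if u > 0, v > 0, and 2·u·v = τ. -/
theorem add_nonneg_and_mul_pos_iff {R : Type*} [Semiring R] [LinearOrder R] [IsStrictOrderedRing R]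
    {a b : R} : 0 ≤ a + b ∧ 0 < a * b ↔ 0 < a ∧ 0 < b := by
  constructor
  · rintro ⟨hadd, hmul⟩
    exact (pos_and_pos_or_neg_and_neg_of_mul_pos hmul).resolve_right
      fun ⟨ha, hb⟩ ↦ (add_neg ha hb).not_ge hadd
  · rintro ⟨ha, hb⟩
    exact ⟨(add_pos ha hb).le, mul_pos ha hb⟩

theorem sqrt_sq_add_sq_add_eq_add_iff {u v τ : ℝ} (h : 0 ≤ u ^ 2 + v ^ 2 + τ) :
    √(u ^ 2 + v ^ 2 + τ) = u + v ↔ 0 ≤ u + v ∧ 2 * u * v = τ := by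
  have sq_eq_iff : u ^ 2 + v ^ 2 + τ = (u + v) ^ 2 ↔ 2 * u * v = τ := by
    rw [add_sq, add_right_comm _ (2 * u * v), add_right_inj, eq_comm]
  calc √(u ^ 2 + v ^ 2 + τ) = u + v
      ↔ 0 ≤ u + v ∧ √(u ^ 2 + v ^ 2 + τ) = u + v :=
        (and_iff_right_of_imp fun hsqrt ↦ hsqrt ▸ Real.sqrt_nonneg _).symm
    _ ↔ 0 ≤ u + v ∧ 2 * u * v = τ :=
        and_congr_right fun hadd ↦ (Real.sqrt_eq_iff_eq_sq h hadd).trans sq_eq_iff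

/-- For `τ > 0`, the perturbed Fischer–Burmeister function
`ψ^τ_FB(u,v) = u + v − √(u² + v² + τ)` vanishes at `(u, v)` if and only if
`u > 0`, `v > 0` and `2·u·v = τ`. -/
theorem perturbed_fischer_burmeister_zero_iff (τ : ℝ) (hτ : 0 < τ) (u v : ℝ) :
    u + v - Real.sqrt (u ^ 2 + v ^ 2 + τ) = 0 ↔ 0 < u ∧ 0 < v ∧ 2 * u * v = τ := by
  have mul_pos_of_eq (h : 2 * u * v = τ) : 0 < u * v := by linarith
  calc u + v - √(u ^ 2 + v ^ 2 + τ) = 0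
      ↔ √(u ^ 2 + v ^ 2 + τ) = u + v := by rw [sub_eq_zero, eq_comm]
    _ ↔ 0 ≤ u + v ∧ 2 * u * v = τ := sqrt_sq_add_sq_add_eq_add_iff (by positivity)
    _ ↔ (0 ≤ u + v ∧ 0 < u * v) ∧ 2 * u * v = τ := by
        rw [and_assoc, and_iff_right_of_imp mul_pos_of_eq]
    _ ↔ 0 < u ∧ 0 < v ∧ 2 * u * v = τ := by rw [add_nonneg_and_mul_pos_iff, and_assoc]
end
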